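/- Let g ∈ H^∞ and let 𝒮_0 = {z ∈ 𝔻 : B′(φ_j(z)) = 0 for some 0 ≤ j ≤ n−1} (a finite set). Then Γ(g) vanishes identically on 𝔻 if and only if there exist an open set Ω ⊂ 𝔻 ∖ 𝒮_0 such that 𝔻 ∖ Ω is discrete, and an integer m ≥ 2, such that for every z ∈ Ω the n-point set B^{-1}(B(z)) can be partitioned into subsets each of cardinality m on each of which g is constant. -/

import Mathlib

open Complex Polynomial MeasureTheory Metric Set Filter Topology
open scoped Classical

noncomputable section

/-- The open unit disk in `ℂ`. -/
def uDisk : Set ℂ := Metric.ball 0 1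

/-- The closed unit disk in `ℂ`. -/
def cDisk : Set ℂ := Metric.closedBall 0 1

/-- The finite Blaschke product with zero set `a 0, …, a (n-1)`:
`B(z) = ∏_j (a_j - z)/(1 - conj(a_j)·z)`. -/
def blaschke {n : ℕ} (a : Fin n → ℂ) (z : ℂ) : ℂ :=
  ∏ j, (a j - z) / (1 - (starRingEnd ℂ) (a j) * z)

/-- The multiset of the `n` solutions (with multiplicity) `φ_0(z) = z, φ_1(z), …, φ_{n-1}(z)`
of `B(w) = B(z)`, realized as the roots of the polynomial equation
`∏_j (a_j - w) = B(z) · ∏_j (1 - conj(a_j)·w)`. -/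
def fiberMS {n : ℕ} (a : Fin n → ℂ) (z : ℂ) : Multiset ℂ :=
  ((∏ j, (Polynomial.C (a j) - Polynomial.X)) -
    Polynomial.C (blaschke a z) *
      ∏ j, (1 - Polynomial.C ((starRingEnd ℂ) (a j)) * Polynomial.X)).roots

/-- `𝒟(f)(z) = ∏_{j=1}^{n-1} (f(z) - f(φ_j(z)))`, where `φ_1(z), …, φ_{n-1}(z)` is the
fiber of `B` over `B(z)` with one copy of `z` removed.  In particular
`calD a id z = ∏_{j=1}^{n-1} (z - φ_j(z))`. -/
def calD {n : ℕ} (a : Fin n → ℂ) (f : ℂ → ℂ) (z : ℂ) : ℂ :=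
  (((fiberMS a z).erase z).map (fun w => f z - f w)).prod

/-- `G` is (the holomorphic extension after removing singularities of) `Γ(f) = 𝒟(f)/𝒟`. -/
def IsGamma {n : ℕ} (a : Fin n → ℂ) (f G : ℂ → ℂ) : Prop :=
  DifferentiableOn ℂ G uDisk ∧ ∀ z ∈ uDisk, G z * calD a id z = calD a f z

/-- `p`-th power integral mean of `f` on the circle of radius `r`. -/
def circMean (p : ℝ) (f : ℂ → ℂ) (r : ℝ) : ℝ :=
  ∫ θ in (0:ℝ)..(2 * Real.pi), ‖f ((r : ℂ) * Complex.exp ((θ : ℂ) * Complex.I))‖ ^ p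

/-- The `H^p` norm of `f` (for `0 < p < ∞`). -/
def hpNorm (p : ℝ) (f : ℂ → ℂ) : ℝ :=
  (sSup {m : ℝ | ∃ r ∈ Set.Ico (0:ℝ) 1, m = circMean p f r}) ^ (1 / p)

/-- Membership in the Hardy space `H^p`, `0 < p < ∞`: holomorphic on the disk with
uniformly bounded integral means. -/
def MemHp (p : ℝ) (f : ℂ → ℂ) : Prop :=
  DifferentiableOn ℂ f uDisk ∧ ∃ C : ℝ, ∀ r ∈ Set.Ico (0:ℝ) 1, circMean p f r ≤ C

/-- Membership in `H^∞`: bounded holomorphic functions on the disk. -/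
def MemHinf (f : ℂ → ℂ) : Prop :=
  DifferentiableOn ℂ f uDisk ∧ ∃ C : ℝ, ∀ z ∈ uDisk, ‖f z‖ ≤ C

/-- The `H^∞` (sup) norm. -/
def hinfNorm (f : ℂ → ℂ) : ℝ := sSup {m : ℝ | ∃ z ∈ uDisk, m = ‖f z‖}

/-- The algebra of all polynomials in the functions `F 0, …, F (m-1)`. -/
def algGen (m : ℕ) (F : Fin m → (ℂ → ℂ)) : Set (ℂ → ℂ) :=
  {h | ∃ P : MvPolynomial (Fin m) ℂ, ∀ z : ℂ, h z = MvPolynomial.eval (fun i => F i z) P}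

/-- The algebra `ℂ[F,G]` of all polynomials in the two functions `F` and `G`. -/
def algGen2 (F G : ℂ → ℂ) : Set (ℂ → ℂ) := algGen 2 ![F, G]

/-- The (sequential) closure of `S` in `H^p`. -/
def hpClosure (p : ℝ) (S : Set (ℂ → ℂ)) : Set (ℂ → ℂ) :=
  {f | MemHp p f ∧ ∃ u : ℕ → (ℂ → ℂ), (∀ k, u k ∈ S) ∧
    Filter.Tendsto (fun k => hpNorm p (fun z => f z - u k z)) Filter.atTop (nhds 0)}

/-- `S` has finite codimension in `H^p`: finitely many functions in `H^p` together with `S`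
span all of `H^p`. -/
def FiniteCodimHp (p : ℝ) (S : Set (ℂ → ℂ)) : Prop :=
  ∃ (k : ℕ) (e : Fin k → (ℂ → ℂ)), (∀ i, MemHp p (e i)) ∧
    ∀ f, MemHp p f → ∃ (c : Fin k → ℂ) (s : ℂ → ℂ), s ∈ S ∧
      ∀ z ∈ uDisk, f z = s z + ∑ i, c i * e i z

/-- Inner function: bounded by 1, holomorphic, radial limits of modulus 1 a.e. -/
def IsInner (f : ℂ → ℂ) : Prop :=
  DifferentiableOn ℂ f uDisk ∧ (∀ z ∈ uDisk, ‖f z‖ ≤ 1) ∧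
  ∀ᵐ θ : ℝ ∂volume, ∃ l : ℂ, ‖l‖ = 1 ∧
    Filter.Tendsto (fun r : ℝ => f ((r : ℂ) * Complex.exp ((θ : ℂ) * Complex.I)))
      (nhdsWithin 1 (Set.Iio 1)) (nhds l)

/-- `J` divides `h`, with a quotient holomorphic on the disk. -/
def InnerDivides (J h : ℂ → ℂ) : Prop :=
  ∃ k : ℂ → ℂ, DifferentiableOn ℂ k uDisk ∧ ∀ z ∈ uDisk, h z = J z * k z

/-- Outer function: a holomorphic function on the disk whose only inner divisors are
unimodular constants (i.e. whose inner part is a unimodular constant). -/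
def IsOuter (h : ℂ → ℂ) : Prop :=
  DifferentiableOn ℂ h uDisk ∧
  ∀ J : ℂ → ℂ, IsInner J → InnerDivides J h →
    ∃ c : ℂ, ‖c‖ = 1 ∧ ∀ z ∈ uDisk, J z = c

/-- `I` is the inner part of `h`: `I` is inner and `h = I·F` with `F` outer. -/
def IsInnerPartOf (I h : ℂ → ℂ) : Prop :=
  IsInner I ∧ ∃ F : ℂ → ℂ, IsOuter F ∧ ∀ z ∈ uDisk, h z = I z * F z

/-- Finite Blaschke product (up to a unimodular constant factor). -/
def IsFiniteBlaschke (f : ℂ → ℂ) : Prop :=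
  ∃ (m : ℕ) (c : ℂ) (b : Fin m → ℂ), ‖c‖ = 1 ∧ (∀ i, b i ∈ uDisk) ∧
    ∀ z ∈ uDisk, f z = c * ∏ i, (b i - z) / (1 - (starRingEnd ℂ) (b i) * z)

/-- `h` has no singular inner factor: every zero-free inner divisor of `h` is a
unimodular constant. -/
def NoSingularInnerFactor (h : ℂ → ℂ) : Prop :=
  ∀ J : ℂ → ℂ, IsInner J → (∀ z ∈ uDisk, J z ≠ 0) → InnerDivides J h →
    ∃ c : ℂ, ‖c‖ = 1 ∧ ∀ z ∈ uDisk, J z = c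

/-!
Let `N(z)` be the number of points `w` in the fiber of `z` with `g(w) = g(z)`. It is the order of
vanishing at `0` of the monic polynomial `∏ (X - (g(w) - g(z)))`, the product being over the fiber.
Off the ramified fibers its coefficients are holomorphic in `z`, by means of local branches of
`B⁻¹ ∘ B`, and they are locally bounded because `B` is proper on the disk; hence they are
meromorphic, and by the identity theorem `N` equals a constant `m` off a discrete set. The union of
the fibers meeting a discrete set is again discrete, so on a generic fiber the level sets of `g`
are blocks of exactly `m` points. At a point `z` with unramified fiber, `Γ(g)(z) = 0` means that
`g` takes the value `g(z)` at another point of the fiber, i.e. `N(z) ≥ 2`; vanishing at generic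
points extends to the disk by continuity.
-/

/-! ### Codiscrete sets -/

section Codiscrete

variable {X Y : Type*} [TopologicalSpace X] [TopologicalSpace Y] {U : Set X} {P : X → Prop}

lemma eventually_codiscreteWithin_iff_of_isOpen (hU : IsOpen U) :
    (∀ᶠ x in codiscreteWithin U, P x) ↔ ∀ x ∈ U, ∀ᶠ y in 𝓝[≠] x, P y := by
  rw [Filter.Eventually, mem_codiscreteWithin_iff_forall_mem_nhdsNE]
  refine forall₂_congr fun x hx => ⟨fun h => ?_, fun h => mem_of_superset h subset_union_left⟩
  filter_upwards [h, mem_nhdsWithin_of_mem_nhds (hU.mem_nhds hx)] with y hy hyU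
  exact hy.resolve_right fun hyU' => hyU' hyU

lemma eventually_codiscreteWithin_iff_exists_isOpen (hU : IsOpen U) :
    (∀ᶠ x in codiscreteWithin U, P x) ↔
      ∃ Ω, IsOpen Ω ∧ Ω ⊆ U ∧ (∀ x ∈ U \ Ω, ∃ V ∈ 𝓝 x, V ∩ (U \ Ω) ⊆ {x}) ∧ ∀ x ∈ Ω, P x := by
  rw [eventually_codiscreteWithin_iff_of_isOpen hU]
  constructor
  · intro h
    refine ⟨{x | x ∈ U ∧ P x}, isOpen_iff_mem_nhds.mpr fun x ⟨hxU, hxP⟩ => ?_, fun x hx => hx.1,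
      fun x hx => ⟨_, eventually_nhdsWithin_iff.mp (h x hx.1), ?_⟩, fun x hx => hx.2⟩
    · have hP : ∀ᶠ y in 𝓝 x, P y := by
        rw [← nhdsNE_sup_pure x, eventually_sup]
        exact ⟨h x hxU, hxP⟩
      exact (hU.eventually_mem hxU).and hP
    · rintro y ⟨hyP, hyU, hy⟩
      by_contra hyx
      exact hy ⟨hyU, hyP hyx⟩
  · rintro ⟨Ω, hΩ, -, hdiscrete, hP⟩ x hx
    by_cases hxΩ : x ∈ Ω
    · exact mem_nhdsWithin_of_mem_nhds ((hΩ.eventually_mem hxΩ).mono hP)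
    · obtain ⟨V, hV, hVsub⟩ := hdiscrete x ⟨hx, hxΩ⟩
      filter_upwards [mem_nhdsWithin_of_mem_nhds hV, self_mem_nhdsWithin,
        mem_nhdsWithin_of_mem_nhds (hU.mem_nhds hx)] with y hyV hyx hyU
      by_contra hy
      exact hyx (hVsub ⟨hyV, hyU, fun hyΩ => hy (hP y hyΩ)⟩)

lemma eqOn_of_eventuallyEq_codiscreteWithin [T2Space Y] [PerfectSpace X] (hU : IsOpen U)
    {f g : X → Y} (hf : ContinuousOn f U) (hg : ContinuousOn g U)
    (hfg : f =ᶠ[codiscreteWithin U] g) : EqOn f g U := by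
  intro x hx
  have hfg := (eventually_codiscreteWithin_iff_of_isOpen hU).mp hfg x hx
  have hfx := (hf.continuousAt (hU.mem_nhds hx)).tendsto.mono_left (nhdsWithin_le_nhds (s := {x}ᶜ))
  have hgx := (hg.continuousAt (hU.mem_nhds hx)).tendsto.mono_left (nhdsWithin_le_nhds (s := {x}ᶜ))
  exact tendsto_nhds_unique_of_eventuallyEq hfx hgx hfg

lemma neBot_codiscreteWithin_of_isOpen [PerfectSpace X] (hU : IsOpen U) (hne : U.Nonempty) :
    (codiscreteWithin U).NeBot := by
  obtain ⟨x, hx⟩ := hne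
  rw [← Filter.frequently_true_iff_neBot, Filter.Frequently,
    eventually_codiscreteWithin_iff_of_isOpen hU]
  exact fun h => (h x hx).exists.elim fun _ h => h trivial

end Codiscrete

/-! ### Partitions into level blocks -/

section LevelBlocks

variable {α β : Type*}

/-- The set `s` is partitioned into blocks of cardinality `m` on each of which `g` is constant.
With Mathlib's convention for `Set.ncard`, infinite blocks are allowed when `m = 0`. -/
def SplitsIntoLevelBlocks (g : α → β) (m : ℕ) (s : Set α) : Prop :=
  ∃ Pa : Set (Set α), ⋃₀ Pa = s ∧ Pa.PairwiseDisjoint id ∧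
    ∀ A ∈ Pa, A.ncard = m ∧ ∀ w₁ ∈ A, ∀ w₂ ∈ A, g w₁ = g w₂

variable {g : α → β} {m : ℕ} {s : Set α}

lemma splitsIntoLevelBlocks_of_ncard_eq (h : ∀ z ∈ s, {w ∈ s | g w = g z}.ncard = m) :
    SplitsIntoLevelBlocks g m s := by
  refine ⟨(fun z => {w ∈ s | g w = g z}) '' s, ?_, ?_, ?_⟩
  · ext w
    simp only [sUnion_image, mem_iUnion]
    exact ⟨fun ⟨_, _, hw⟩ => hw.1, fun hw => ⟨w, hw, hw, rfl⟩⟩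
  · rintro _ ⟨z, -, rfl⟩ _ ⟨z', -, rfl⟩ hne
    refine disjoint_left.mpr fun w hw hw' => hne ?_
    simp only [← hw.2, ← hw'.2]
  · rintro _ ⟨z, hz, rfl⟩
    exact ⟨h z hz, fun w₁ h₁ w₂ h₂ => h₁.2.trans h₂.2.symm⟩

lemma SplitsIntoLevelBlocks.exists_ne (h : SplitsIntoLevelBlocks g m s) (hm : 2 ≤ m) {z : α}
    (hz : z ∈ s) : ∃ w ∈ s, w ≠ z ∧ g w = g z := by
  obtain ⟨Pa, rfl, -, hPa⟩ := h
  obtain ⟨A, hA, hzA⟩ := hz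
  obtain ⟨hcard, hconst⟩ := hPa A hA
  obtain ⟨w, hwA, hwz⟩ := exists_ne_of_one_lt_ncard (hcard ▸ hm) z
  exact ⟨w, ⟨A, hA, hwA⟩, hwz, hconst w hwA z hzA⟩

end LevelBlocks

/-! ### Analytic families -/

section AnalyticFamilies

variable {𝕜 : Type*} [NontriviallyNormedField 𝕜]

lemma eventually_eq_zero_or_eventually_ne_zero_of_meromorphicOn {E : Type*} [NormedAddCommGroup E]
    [NormedSpace 𝕜 E] [CompleteSpace 𝕜] {f : 𝕜 → E} {U : Set 𝕜} (hf : MeromorphicOn f U)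
    (hU : IsPreconnected U) :
    (∀ᶠ z in codiscreteWithin U, f z = 0) ∨ ∀ᶠ z in codiscreteWithin U, f z ≠ 0 := by
  by_cases h : ∀ z ∈ U, meromorphicOrderAt f z = ⊤
  · refine Or.inl (mem_codiscreteWithin_iff_forall_mem_nhdsNE.mpr fun z hz => ?_)
    exact mem_of_superset (meromorphicOrderAt_eq_top_iff.mp (h z hz)) subset_union_left
  · push Not at h
    obtain ⟨x, hx, hord⟩ := h
    exact Or.inr <| hf.eventually_codiscreteWithin_apply_ne_zero fun z hz =>
      hf.meromorphicOrderAt_ne_top_of_isPreconnected hU hx hz hord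

lemma exists_eventually_natTrailingDegree_eq [CompleteSpace 𝕜] {p : 𝕜 → 𝕜[X]} {U : Set 𝕜}
    (hU : IsPreconnected U) (hp : ∀ k, MeromorphicOn (fun z => (p z).coeff k) U)
    (hne : ∃ k, ∀ᶠ z in codiscreteWithin U, (p z).coeff k ≠ 0) :
    ∃ m, ∀ᶠ z in codiscreteWithin U, (p z).natTrailingDegree = m := by
  refine ⟨Nat.find hne, ?_⟩
  have hlow : ∀ᶠ z in codiscreteWithin U, ∀ k ∈ Finset.range (Nat.find hne), (p z).coeff k = 0 :=
    (Filter.eventually_all_finset _).mpr fun k hk =>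
      (eventually_eq_zero_or_eventually_ne_zero_of_meromorphicOn (hp k) hU).resolve_right
        (Nat.find_min hne (Finset.mem_range.mp hk))
  filter_upwards [Nat.find_spec hne, hlow] with z hm hlow
  refine le_antisymm (natTrailingDegree_le_of_ne_zero hm) ?_
  exact le_natTrailingDegree (fun h => hm (by rw [h, coeff_zero]))
    fun k hk => hlow k (Finset.mem_range.mpr hk)

lemma analyticAt_coeff_multiset_prod {ι E : Type*} [NormedAddCommGroup E] [NormedSpace 𝕜 E]
    (s : Multiset ι) {p : ι → E → 𝕜[X]} {x : E}
    (hp : ∀ i ∈ s, ∀ k, AnalyticAt 𝕜 (fun v => (p i v).coeff k) x) (k : ℕ) :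
    AnalyticAt 𝕜 (fun v => (s.map (p · v)).prod.coeff k) x := by
  induction s using Multiset.induction_on generalizing k with
  | empty => simpa only [Multiset.map_zero, Multiset.prod_zero] using analyticAt_const
  | cons i s ih =>
    simp only [Multiset.map_cons, Multiset.prod_cons, coeff_mul]
    refine Finset.analyticAt_fun_sum _ fun kl _ => ?_
    exact (hp i (Multiset.mem_cons_self i s) kl.1).fun_mul
      (ih (fun j hj => hp j (Multiset.mem_cons_of_mem hj)) kl.2)

lemma analyticAt_coeff_X_sub_C {E : Type*} [NormedAddCommGroup E] [NormedSpace 𝕜 E] {f : E → 𝕜}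
    {x : E} (hf : AnalyticAt 𝕜 f x) (k : ℕ) :
    AnalyticAt 𝕜 (fun v => (X - C (f v)).coeff k) x := by
  simp only [coeff_sub, coeff_C]
  split_ifs
  · exact analyticAt_const.fun_sub hf
  · exact analyticAt_const

lemma exists_analyticAt_lift {E : Type*} [NormedAddCommGroup E] [NormedSpace 𝕜 E]
    [CompleteSpace 𝕜] [CharZero 𝕜] {f : 𝕜 → 𝕜} {h : E → 𝕜} {w : 𝕜} {x : E}
    (hf : AnalyticAt 𝕜 f w) (hf' : deriv f w ≠ 0) (hh : AnalyticAt 𝕜 h x) (hwx : f w = h x) :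
    ∃ φ : E → 𝕜, AnalyticAt 𝕜 φ x ∧ φ x = w ∧ ∀ᶠ v in 𝓝 x, f (φ v) = h v := by
  refine ⟨fun v => hf.hasStrictDerivAt.localInverse _ _ _ hf' (h v), ?_, ?_, ?_⟩
  · exact (hf.analyticAt_localInverse hf').fun_comp_of_eq hh hwx.symm
  · simp only [← hwx]
    exact HasStrictFDerivAt.localInverse_apply_image ..
  · exact hh.continuousAt.eventually (hwx ▸ hf.hasStrictDerivAt.eventually_right_inverse hf')

lemma meromorphicAt_of_differentiableAt_of_isBoundedUnder {E : Type*} [NormedAddCommGroup E]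
    [NormedSpace ℂ E] [CompleteSpace E] {f : ℂ → E} {c : ℂ}
    (hf : ∀ᶠ z in 𝓝[≠] c, DifferentiableAt ℂ f z)
    (hb : IsBoundedUnder (· ≤ ·) (𝓝[≠] c) fun z => ‖f z‖) : MeromorphicAt f c := by
  obtain ⟨C, hC⟩ := hb
  have hb' : IsBoundedUnder (· ≤ ·) (𝓝[≠] c) fun z => ‖f z - f c‖ :=
    ⟨C + ‖f c‖, eventually_map.mpr <|
      (eventually_map.mp hC).mono fun _ h => norm_sub_le_of_le h le_rfl⟩
  have hext := differentiableOn_update_limUnder_insert_of_isLittleO hf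
    (fun z hz => DifferentiableAt.differentiableWithinAt hz) hb'.isLittleO_sub_self_inv
  refine (hext.analyticAt (insert_mem_nhds_iff.mpr hf)).meromorphicAt.congr ?_
  filter_upwards [self_mem_nhdsWithin] with z hz using Function.update_of_ne hz _ _

lemma eventually_injOn_of_continuousAt {ι X Y : Type*} [TopologicalSpace X] [TopologicalSpace Y]
    [T2Space Y] {s : Set ι} (hs : s.Finite) {φ : ι → X → Y} {x : X}
    (hφ : ∀ i ∈ s, ContinuousAt (φ i) x) (hinj : s.InjOn (φ · x)) :
    ∀ᶠ v in 𝓝 x, s.InjOn (φ · v) := by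
  have hne : ∀ᶠ v in 𝓝 x, ∀ i ∈ s, ∀ j ∈ s, i ≠ j → φ i v ≠ φ j v := by
    simp only [eventually_all_finite hs, eventually_imp_distrib_left]
    exact fun i hi j hj hij =>
      ((hφ i hi).ne_iff_eventually_ne (hφ j hj)).mp (hinj.ne hi hj hij)
  filter_upwards [hne] with v hv i hi j hj h
  by_contra hij
  exact hv i hi j hj hij h

end AnalyticFamilies

/-! ### Fibers of the Blaschke product -/

lemma mem_uDisk {z : ℂ} : z ∈ uDisk ↔ ‖z‖ < 1 := mem_ball_zero_iff

lemma isOpen_uDisk : IsOpen uDisk := isOpen_ball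

lemma isConnected_uDisk : IsConnected uDisk :=
  (convex_ball 0 1).isConnected ⟨0, mem_ball_self one_pos⟩

section BlaschkeFactor

variable {b w : ℂ}

lemma norm_one_sub_conj_mul_sq_sub_norm_sub_sq (b w : ℂ) :
    ‖1 - (starRingEnd ℂ) b * w‖ ^ 2 - ‖b - w‖ ^ 2 = (1 - ‖b‖ ^ 2) * (1 - ‖w‖ ^ 2) := by
  simp only [← normSq_eq_norm_sq, normSq_apply, sub_re, sub_im, mul_re, mul_im, conj_re, conj_im,
    one_re, one_im]
  ring

lemma one_sub_conj_mul_ne_zero (hb : b ∈ uDisk) (hw : ‖w‖ ≤ 1) :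
    1 - (starRingEnd ℂ) b * w ≠ 0 := by
  have hlt : ‖(starRingEnd ℂ) b * w‖ < 1 := by
    rw [norm_mul, norm_conj]
    exact mul_lt_one_of_nonneg_of_lt_one_left (norm_nonneg b) (mem_uDisk.mp hb) hw
  intro h
  rw [← sub_eq_zero.mp h, norm_one] at hlt
  exact lt_irrefl _ hlt

lemma norm_sub_div_one_sub_conj_mul_lt_one (hb : b ∈ uDisk) (hw : w ∈ uDisk) :
    ‖(b - w) / (1 - (starRingEnd ℂ) b * w)‖ < 1 := by
  rw [mem_uDisk] at hw
  have hden := norm_pos_iff.mpr (one_sub_conj_mul_ne_zero hb hw.le)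
  have hpos : 0 < (1 - ‖b‖ ^ 2) * (1 - ‖w‖ ^ 2) :=
    mul_pos (sub_pos.mpr (pow_lt_one₀ (norm_nonneg b) (mem_uDisk.mp hb) two_ne_zero))
      (sub_pos.mpr (pow_lt_one₀ (norm_nonneg w) hw two_ne_zero))
  rw [norm_div, div_lt_one hden]
  refine lt_of_pow_lt_pow_left₀ 2 hden.le ?_
  linarith [norm_one_sub_conj_mul_sq_sub_norm_sub_sq b w]

lemma norm_one_sub_conj_mul_le_norm_sub (hb : b ∈ uDisk) (hw : 1 ≤ ‖w‖) :
    ‖1 - (starRingEnd ℂ) b * w‖ ≤ ‖b - w‖ := by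
  have hnonpos : (1 - ‖b‖ ^ 2) * (1 - ‖w‖ ^ 2) ≤ 0 :=
    mul_nonpos_of_nonneg_of_nonpos
      (sub_nonneg.mpr (pow_le_one₀ (norm_nonneg b) (mem_uDisk.mp hb).le))
      (sub_nonpos.mpr (one_le_pow₀ hw))
  refine le_of_sq_le_sq ?_ (norm_nonneg _)
  linarith [norm_one_sub_conj_mul_sq_sub_norm_sub_sq b w]

end BlaschkeFactor

section Fiber

variable {n : ℕ} {a : Fin n → ℂ} {c z w : ℂ}

lemma prod_one_sub_conj_mul_ne_zero (ha : ∀ j, a j ∈ uDisk) (hw : ‖w‖ ≤ 1) :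
    ∏ j, (1 - (starRingEnd ℂ) (a j) * w) ≠ 0 :=
  Finset.prod_ne_zero_iff.mpr fun j _ => one_sub_conj_mul_ne_zero (ha j) hw

lemma blaschke_mul_prod_one_sub_conj_mul (ha : ∀ j, a j ∈ uDisk) (hw : ‖w‖ ≤ 1) :
    blaschke a w * ∏ j, (1 - (starRingEnd ℂ) (a j) * w) = ∏ j, (a j - w) := by
  rw [blaschke, ← Finset.prod_mul_distrib]
  exact Finset.prod_congr rfl fun j _ => div_mul_cancel₀ _ (one_sub_conj_mul_ne_zero (ha j) hw)

lemma norm_blaschke_lt_one [NeZero n] (ha : ∀ j, a j ∈ uDisk) (hz : z ∈ uDisk) :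
    ‖blaschke a z‖ < 1 := by
  have hlt j := norm_sub_div_one_sub_conj_mul_lt_one (ha j) hz
  rw [blaschke, norm_prod, ← Finset.mul_prod_erase _ _ (Finset.mem_univ 0)]
  exact mul_lt_one_of_nonneg_of_lt_one_left (norm_nonneg _) (hlt 0)
    (Finset.prod_le_one (fun _ _ => norm_nonneg _) fun j _ => (hlt j).le)

lemma analyticAt_blaschke (ha : ∀ j, a j ∈ uDisk) (hw : ‖w‖ ≤ 1) :
    AnalyticAt ℂ (blaschke a) w := by
  unfold blaschke
  refine Finset.analyticAt_fun_prod _ fun j _ => ?_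
  exact AnalyticAt.div (by fun_prop) (by fun_prop) (one_sub_conj_mul_ne_zero (ha j) hw)

/-- The polynomial in `w` obtained from `B(w) = c` by clearing denominators, so that
`fiberMS a z` is the multiset of roots of `fiberPoly a (blaschke a z)`. -/
def fiberPoly (a : Fin n → ℂ) (c : ℂ) : ℂ[X] :=
  (∏ j, (C (a j) - X)) - C c * ∏ j, (1 - C ((starRingEnd ℂ) (a j)) * X)

lemma eval_fiberPoly (a : Fin n → ℂ) (c w : ℂ) :
    (fiberPoly a c).eval w = (∏ j, (a j - w)) - c * ∏ j, (1 - (starRingEnd ℂ) (a j) * w) := by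
  simp [fiberPoly, eval_prod]

lemma eval_fiberPoly_eq_sub_mul (ha : ∀ j, a j ∈ uDisk) (c : ℂ) (hw : ‖w‖ ≤ 1) :
    (fiberPoly a c).eval w = (blaschke a w - c) * ∏ j, (1 - (starRingEnd ℂ) (a j) * w) := by
  rw [eval_fiberPoly, ← blaschke_mul_prod_one_sub_conj_mul ha hw, sub_mul]

lemma mem_uDisk_of_isRoot_fiberPoly (ha : ∀ j, a j ∈ uDisk) (hc : ‖c‖ < 1)
    (hw : (fiberPoly a c).IsRoot w) : w ∈ uDisk := by
  by_contra hw1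
  rw [mem_uDisk, not_lt] at hw1
  rw [IsRoot.def, eval_fiberPoly, sub_eq_zero] at hw
  have hle : ‖∏ j, (1 - (starRingEnd ℂ) (a j) * w)‖ ≤ ‖∏ j, (a j - w)‖ := by
    simp only [norm_prod]
    exact Finset.prod_le_prod (fun _ _ => norm_nonneg _)
      fun j _ => norm_one_sub_conj_mul_le_norm_sub (ha j) hw1
  have hpos : 0 < ‖∏ j, (a j - w)‖ := by
    rw [norm_pos_iff, Finset.prod_ne_zero_iff]
    exact fun j _ hj => hw1.not_gt (sub_eq_zero.mp hj ▸ mem_uDisk.mp (ha j))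
  have hlt : ‖c * ∏ j, (1 - (starRingEnd ℂ) (a j) * w)‖ < ‖∏ j, (a j - w)‖ := by
    rw [norm_mul]
    nlinarith [norm_nonneg c]
  exact hlt.ne (congrArg norm hw.symm)

lemma isRoot_fiberPoly_iff (ha : ∀ j, a j ∈ uDisk) (hw : ‖w‖ ≤ 1) :
    (fiberPoly a c).IsRoot w ↔ blaschke a w = c := by
  rw [IsRoot.def, eval_fiberPoly_eq_sub_mul ha c hw, mul_eq_zero,
    or_iff_left (prod_one_sub_conj_mul_ne_zero ha hw), sub_eq_zero]

lemma eval_derivative_fiberPoly (ha : ∀ j, a j ∈ uDisk) (hw : w ∈ uDisk)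
    (hwc : blaschke a w = c) :
    (fiberPoly a c).derivative.eval w =
      deriv (blaschke a) w * ∏ j, (1 - (starRingEnd ℂ) (a j) * w) := by
  have heq : (fun v => (fiberPoly a c).eval v) =ᶠ[𝓝 w]
      (fun v => blaschke a v - c) * fun v => ∏ j, (1 - (starRingEnd ℂ) (a j) * v) := by
    filter_upwards [isOpen_uDisk.mem_nhds hw] with v hv
    exact eval_fiberPoly_eq_sub_mul ha c (mem_uDisk.mp hv).le
  have hden : DifferentiableAt ℂ (fun v => ∏ j, (1 - (starRingEnd ℂ) (a j) * v)) w := by fun_prop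
  have hB := (analyticAt_blaschke ha (mem_uDisk.mp hw).le).differentiableAt.hasDerivAt
  have hderiv := ((hB.sub_const c).mul hden.hasDerivAt).congr_of_eventuallyEq heq
  rw [((fiberPoly a c).hasDerivAt w).unique hderiv, hwc, sub_self, zero_mul, add_zero]

lemma natDegree_C_sub_X_le (b : ℂ) : (C b - X : ℂ[X]).natDegree ≤ 1 := by
  compute_degree

lemma natDegree_one_sub_C_mul_X_le (b : ℂ) : (1 - C b * X : ℂ[X]).natDegree ≤ 1 := by
  compute_degree

lemma coeff_fiberPoly (a : Fin n → ℂ) (c : ℂ) :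
    (fiberPoly a c).coeff n = (-1) ^ n * (1 - c * ∏ j, (starRingEnd ℂ) (a j)) := by
  have hnum : (∏ j, (C (a j) - X) : ℂ[X]).coeff n = (-1) ^ n := by
    simpa [coeff_C] using
      coeff_prod_of_natDegree_le Finset.univ _ 1 fun j _ => natDegree_C_sub_X_le (a j)
  have hden : (∏ j, (1 - C ((starRingEnd ℂ) (a j)) * X) : ℂ[X]).coeff n =
      (-1) ^ n * ∏ j, (starRingEnd ℂ) (a j) := by
    simpa [coeff_one, Finset.prod_neg] using
      coeff_prod_of_natDegree_le Finset.univ _ 1 fun j _ =>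
        natDegree_one_sub_C_mul_X_le ((starRingEnd ℂ) (a j))
  rw [fiberPoly, coeff_sub, coeff_C_mul, hnum, hden]
  ring

lemma natDegree_fiberPoly_le (a : Fin n → ℂ) (c : ℂ) : (fiberPoly a c).natDegree ≤ n := by
  refine (natDegree_sub_le _ _).trans (max_le ?_ ((natDegree_C_mul_le c _).trans ?_))
  · simpa using (natDegree_prod_le Finset.univ _).trans
      (Finset.sum_le_card_nsmul _ _ 1 fun j _ => natDegree_C_sub_X_le (a j))
  · simpa using (natDegree_prod_le Finset.univ _).trans
      (Finset.sum_le_card_nsmul _ _ 1 fun j _ =>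
        natDegree_one_sub_C_mul_X_le ((starRingEnd ℂ) (a j)))

lemma coeff_fiberPoly_ne_zero (ha : ∀ j, a j ∈ uDisk) (hc : ‖c‖ < 1) :
    (fiberPoly a c).coeff n ≠ 0 := by
  have hlt : ‖c * ∏ j, (starRingEnd ℂ) (a j)‖ < 1 := by
    rw [norm_mul, norm_prod]
    refine mul_lt_one_of_nonneg_of_lt_one_left (norm_nonneg c) hc
      (Finset.prod_le_one (fun _ _ => norm_nonneg _) fun j _ => ?_)
    exact (norm_conj (a j)).trans_le (mem_uDisk.mp (ha j)).le
  rw [coeff_fiberPoly]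
  refine mul_ne_zero (pow_ne_zero n (neg_ne_zero.mpr one_ne_zero)) fun h => ?_
  rw [← sub_eq_zero.mp h, norm_one] at hlt
  exact lt_irrefl _ hlt

lemma fiberPoly_ne_zero (ha : ∀ j, a j ∈ uDisk) (hc : ‖c‖ < 1) : fiberPoly a c ≠ 0 :=
  fun h => coeff_fiberPoly_ne_zero ha hc (by rw [h, coeff_zero])

lemma natDegree_fiberPoly (ha : ∀ j, a j ∈ uDisk) (hc : ‖c‖ < 1) :
    (fiberPoly a c).natDegree = n :=
  natDegree_eq_of_le_of_coeff_ne_zero (natDegree_fiberPoly_le a c) (coeff_fiberPoly_ne_zero ha hc)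

/-- The fiber `B⁻¹(B(z))` of the Blaschke product inside the unit disk, as a set. -/
def fiber (a : Fin n → ℂ) (z : ℂ) : Set ℂ :=
  {w | w ∈ uDisk ∧ blaschke a w = blaschke a z}

/-- The fiber of `z` contains no critical point of the Blaschke product; these are the points of
`𝔻 ∖ 𝒮₀` in the paper's notation. -/
def IsRegularPoint (a : Fin n → ℂ) (z : ℂ) : Prop :=
  ∀ w ∈ fiber a z, deriv (blaschke a) w ≠ 0

lemma self_mem_fiber (a : Fin n → ℂ) (hz : z ∈ uDisk) : z ∈ fiber a z := ⟨hz, rfl⟩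

lemma fiber_eq_of_mem (hw : w ∈ fiber a z) : fiber a w = fiber a z := by
  rw [fiber, hw.2, fiber]

variable [NeZero n]

lemma mem_fiberMS (ha : ∀ j, a j ∈ uDisk) (hz : z ∈ uDisk) : w ∈ fiberMS a z ↔ w ∈ fiber a z := by
  have hc := norm_blaschke_lt_one ha hz
  refine (mem_roots (p := fiberPoly a (blaschke a z)) (fiberPoly_ne_zero ha hc)).trans
    ⟨fun h => ?_, fun h => (isRoot_fiberPoly_iff ha (mem_uDisk.mp h.1).le).mpr h.2⟩
  have hw := mem_uDisk_of_isRoot_fiberPoly ha hc h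
  exact ⟨hw, (isRoot_fiberPoly_iff ha (mem_uDisk.mp hw).le).mp h⟩

lemma finite_fiber (ha : ∀ j, a j ∈ uDisk) (hz : z ∈ uDisk) : (fiber a z).Finite :=
  (fiberMS a z).toFinset.finite_toSet.subset fun _ hw =>
    Multiset.mem_toFinset.mpr ((mem_fiberMS ha hz).mpr hw)

lemma card_fiberMS (ha : ∀ j, a j ∈ uDisk) (hz : z ∈ uDisk) : (fiberMS a z).card = n :=
  (splits_iff_card_roots.mp (IsAlgClosed.splits (fiberPoly a (blaschke a z)))).trans
    (natDegree_fiberPoly ha (norm_blaschke_lt_one ha hz))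

lemma nodup_fiberMS (ha : ∀ j, a j ∈ uDisk) (hz : z ∈ uDisk) (hreg : IsRegularPoint a z) :
    (fiberMS a z).Nodup := by
  have hne := fiberPoly_ne_zero ha (norm_blaschke_lt_one ha hz)
  refine Multiset.nodup_iff_count_le_one.mpr fun w => ?_
  change (fiberPoly a (blaschke a z)).roots.count w ≤ 1
  rw [count_roots]
  by_contra! hlt
  obtain ⟨hroot, hderiv⟩ := (one_lt_rootMultiplicity_iff_isRoot hne).mp hlt
  have hw : w ∈ fiber a z := (mem_fiberMS ha hz).mp ((mem_roots hne).mpr hroot)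
  rw [IsRoot.def, eval_derivative_fiberPoly ha hw.1 hw.2] at hderiv
  exact mul_ne_zero (hreg w hw) (prod_one_sub_conj_mul_ne_zero ha (mem_uDisk.mp hw.1).le) hderiv

/-! ### Saturation of codiscrete sets -/

lemma eventually_forall_mem_fiber {P : ℂ → Prop} (ha : ∀ j, a j ∈ uDisk) (hz : z ∈ uDisk)
    (hP : ∀ w ∈ fiber a z, ∀ᶠ u in 𝓝 w, P u) : ∀ᶠ v in 𝓝 z, ∀ w ∈ fiber a v, P w := by
  have hcont : ContinuousOn (blaschke a) (closedBall 0 1) := fun w hw =>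
    (analyticAt_blaschke ha (mem_closedBall_zero_iff.mp hw)).continuousAt.continuousWithinAt
  -- `B` is a closed map on the compact closed disk, and the fiber of `z` there avoids the circle.
  have hclosed : IsClosedMap ((closedBall 0 1).domRestrict (blaschke a)) :=
    hcont.domRestrict.isClosedMap
  have hfiber : ∀ w ∈ (closedBall 0 1).domRestrict (blaschke a) ⁻¹' {blaschke a z},
      ∀ᶠ u : closedBall (0 : ℂ) 1 in 𝓝 w, P u := by
    rintro ⟨w, hw⟩ hwz
    have hroot := (isRoot_fiberPoly_iff ha (mem_closedBall_zero_iff.mp hw)).mpr hwz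
    have hwD := mem_uDisk_of_isRoot_fiberPoly ha (norm_blaschke_lt_one ha hz) hroot
    exact continuousAt_subtype_val.eventually (hP w ⟨hwD, hwz⟩)
  have hev := (analyticAt_blaschke ha (mem_uDisk.mp hz).le).continuousAt.eventually
    (hclosed.eventually_nhds_fiber _ hfiber)
  filter_upwards [hev] with v hv w hw
  exact hv ⟨w, ball_subset_closedBall hw.1⟩ hw.2

lemma eventually_codiscreteWithin_forall_mem_fiber {P : ℂ → Prop} (ha : ∀ j, a j ∈ uDisk)
    (hP : ∀ᶠ z in codiscreteWithin uDisk, P z) :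
    ∀ᶠ z in codiscreteWithin uDisk, ∀ w ∈ fiber a z, P w := by
  simp only [eventually_codiscreteWithin_iff_of_isOpen isOpen_uDisk] at hP ⊢
  intro z hz
  -- Near the fiber of `z` the exceptional points lie in that fiber, which is finite.
  have hnear : ∀ᶠ v in 𝓝 z, ∀ w ∈ fiber a v, w ∉ fiber a z → P w :=
    eventually_forall_mem_fiber ha hz fun w hw =>
      (eventually_nhdsWithin_iff.mp (hP w hw.1)).mono fun u hu huz => hu fun huw => huz (huw ▸ hw)
  have hoff : ∀ᶠ v in 𝓝[≠] z, v ∉ fiber a z :=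
    nhdsNE_le_cofinite z (finite_fiber ha hz).compl_mem_cofinite
  filter_upwards [nhdsWithin_le_nhds hnear, hoff,
    mem_nhdsWithin_of_mem_nhds (isOpen_uDisk.mem_nhds hz)] with v hv hvz hvD w hw
  exact hv w hw fun hwz => hvz (fiber_eq_of_mem hwz ▸ fiber_eq_of_mem hw ▸ self_mem_fiber a hvD)

lemma eventually_deriv_blaschke_ne_zero (ha : ∀ j, a j ∈ uDisk) :
    ∀ᶠ z in codiscreteWithin uDisk, deriv (blaschke a) z ≠ 0 := by
  have hB : ∀ w ∈ uDisk, AnalyticAt ℂ (blaschke a) w := fun w hw =>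
    analyticAt_blaschke ha (mem_uDisk.mp hw).le
  have hconn := isConnected_uDisk.isPreconnected
  refine (AnalyticOnNhd.eqOn_zero_or_eventually_ne_zero_of_preconnected
    (fun w hw => (hB w hw).deriv) hconn).resolve_left fun hderiv => ?_
  obtain ⟨z, hz⟩ := isConnected_uDisk.nonempty
  -- A constant `B` would make the whole disk a single finite fiber.
  have hsub : uDisk ⊆ fiber a z := fun w hw => ⟨hw, isOpen_uDisk.is_const_of_deriv_eq_zero hconn
    (fun v hv => (hB v hv).differentiableAt.differentiableWithinAt) hderiv hw hz⟩
  exact infinite_of_mem_nhds z (isOpen_uDisk.mem_nhds hz) ((finite_fiber ha hz).subset hsub)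

lemma eventually_isRegularPoint (ha : ∀ j, a j ∈ uDisk) :
    ∀ᶠ z in codiscreteWithin uDisk, IsRegularPoint a z :=
  eventually_codiscreteWithin_forall_mem_fiber ha (eventually_deriv_blaschke_ne_zero ha)

/-! ### Local branches of the fiber -/

lemma exists_analyticAt_branches (ha : ∀ j, a j ∈ uDisk) (hz : z ∈ uDisk)
    (hreg : IsRegularPoint a z) :
    ∃ φ : ℂ → ℂ → ℂ, (∀ w ∈ fiber a z, AnalyticAt ℂ (φ w) z ∧ φ w z = w) ∧
      ∀ᶠ v in 𝓝 z, fiberMS a v = (fiberMS a z).map (φ · v) := by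
  have hB : ∀ w ∈ uDisk, AnalyticAt ℂ (blaschke a) w := fun w hw =>
    analyticAt_blaschke ha (mem_uDisk.mp hw).le
  have hlift : ∀ w ∈ fiber a z, ∃ φ : ℂ → ℂ, AnalyticAt ℂ φ z ∧ φ z = w ∧
      ∀ᶠ v in 𝓝 z, blaschke a (φ v) = blaschke a v := fun w hw =>
    exists_analyticAt_lift (hB w hw.1) (hreg w hw) (hB z hz) hw.2
  choose! φ hφ hφz hφB using hlift
  refine ⟨φ, fun w hw => ⟨hφ w hw, hφz w hw⟩, ?_⟩
  have hmem : ∀ᶠ v in 𝓝 z, ∀ w ∈ fiber a z, φ w v ∈ fiber a v := by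
    refine (eventually_all_finite (finite_fiber ha hz)).mpr fun w hw => ?_
    have hD := isOpen_uDisk.mem_nhds ((hφz w hw).symm ▸ hw.1)
    exact ((hφ w hw).continuousAt.eventually hD).and (hφB w hw)
  have hinj : ∀ᶠ v in 𝓝 z, (fiber a z).InjOn (φ · v) :=
    eventually_injOn_of_continuousAt (finite_fiber ha hz) (fun w hw => (hφ w hw).continuousAt)
      ((injOn_id _).congr fun w hw => (hφz w hw).symm)
  filter_upwards [hmem, hinj, isOpen_uDisk.mem_nhds hz] with v hv hvinj hvD
  -- The branches give `n` distinct points of a multiset of cardinality `n`.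
  refine (Multiset.eq_of_le_of_card_le ?_ ?_).symm
  · refine (Multiset.le_iff_subset ((nodup_fiberMS ha hz hreg).map_on fun w hw w' hw' h =>
      hvinj ((mem_fiberMS ha hz).mp hw) ((mem_fiberMS ha hz).mp hw') h)).mpr fun u hu => ?_
    obtain ⟨w, hw, rfl⟩ := Multiset.mem_map.mp hu
    exact (mem_fiberMS ha hvD).mpr (hv w ((mem_fiberMS ha hz).mp hw))
  · rw [Multiset.card_map, card_fiberMS ha hvD, card_fiberMS ha hz]

end Fiber

/-! ### The values of `g` on a fiber -/

section ValuePoly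

variable {n : ℕ} {a : Fin n → ℂ} {g : ℂ → ℂ} {z : ℂ}

/-- The monic polynomial with roots `g(w) - g(z)`, for `w` in the fiber of `z` with multiplicity.
Its order of vanishing at `0` counts the fiber points at which `g` takes the value `g(z)`. -/
def valuePoly (a : Fin n → ℂ) (g : ℂ → ℂ) (z : ℂ) : ℂ[X] :=
  (((fiberMS a z).map fun w => g w - g z).map fun c => X - C c).prod

lemma monic_valuePoly (a : Fin n → ℂ) (g : ℂ → ℂ) (z : ℂ) : (valuePoly a g z).Monic :=
  monic_multiset_prod_of_monic _ _ fun c _ => monic_X_sub_C c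

lemma natDegree_valuePoly (a : Fin n → ℂ) (g : ℂ → ℂ) (z : ℂ) :
    (valuePoly a g z).natDegree = (fiberMS a z).card := by
  rw [valuePoly, natDegree_multiset_prod_X_sub_C_eq_card, Multiset.card_map]

lemma roots_valuePoly (a : Fin n → ℂ) (g : ℂ → ℂ) (z : ℂ) :
    (valuePoly a g z).roots = (fiberMS a z).map fun w => g w - g z :=
  roots_multiset_prod_X_sub_C _

lemma natTrailingDegree_valuePoly (a : Fin n → ℂ) (g : ℂ → ℂ) (z : ℂ) :
    (valuePoly a g z).natTrailingDegree = ((fiberMS a z).filter fun w => g w = g z).card := by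
  rw [← rootMultiplicity_eq_natTrailingDegree', ← count_roots, roots_valuePoly, Multiset.count_map]
  simp only [eq_comm (a := (0 : ℂ)), sub_eq_zero]

variable [NeZero n]

lemma natTrailingDegree_valuePoly_eq_ncard (g : ℂ → ℂ) (ha : ∀ j, a j ∈ uDisk) (hz : z ∈ uDisk)
    (hreg : IsRegularPoint a z) :
    (valuePoly a g z).natTrailingDegree = {w ∈ fiber a z | g w = g z}.ncard := by
  have hset : {w ∈ fiber a z | g w = g z} =
      ((fiberMS a z).filter fun w => g w = g z).toFinset := by
    ext w
    rw [Finset.mem_coe, Multiset.mem_toFinset, Multiset.mem_filter, mem_fiberMS ha hz]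
    rfl
  rw [natTrailingDegree_valuePoly, hset, ncard_coe_finset,
    Multiset.toFinset_card_of_nodup ((nodup_fiberMS ha hz hreg).filter _)]

lemma analyticAt_coeff_valuePoly (ha : ∀ j, a j ∈ uDisk) (hg : DifferentiableOn ℂ g uDisk)
    (hz : z ∈ uDisk) (hreg : IsRegularPoint a z) (k : ℕ) :
    AnalyticAt ℂ (fun v => (valuePoly a g v).coeff k) z := by
  have hg' : ∀ w ∈ uDisk, AnalyticAt ℂ g w := fun w hw =>
    hg.analyticAt (isOpen_uDisk.mem_nhds hw)
  obtain ⟨φ, hφ, hbranches⟩ := exists_analyticAt_branches ha hz hreg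
  refine (analyticAt_coeff_multiset_prod (fiberMS a z)
    (p := fun w v => X - C (g (φ w v) - g v)) (fun w hw => ?_) k).congr ?_
  · obtain ⟨hφw, hφwz⟩ := hφ w ((mem_fiberMS ha hz).mp hw)
    have hgw := hg' w ((mem_fiberMS ha hz).mp hw).1
    exact analyticAt_coeff_X_sub_C ((hgw.fun_comp_of_eq hφw hφwz).fun_sub (hg' z hz))
  · filter_upwards [hbranches] with v hv
    rw [valuePoly, hv, Multiset.map_map, Multiset.map_map]
    rfl

lemma exists_eventually_forall_mem_fiber_norm_le (ha : ∀ j, a j ∈ uDisk)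
    (hg : ContinuousOn g uDisk) (hz : z ∈ uDisk) :
    ∃ M, ∀ᶠ v in 𝓝 z, ∀ w ∈ fiber a v, ‖g w‖ ≤ M := by
  obtain ⟨M, hM⟩ := ((finite_fiber ha hz).image (‖g ·‖)).bddAbove
  refine ⟨M + 1, eventually_forall_mem_fiber ha hz fun w hw => ?_⟩
  have hlt : ‖g w‖ < M + 1 := (hM (mem_image_of_mem _ hw)).trans_lt (lt_add_one M)
  exact ((hg.continuousAt (isOpen_uDisk.mem_nhds hw.1)).norm.eventually_lt_const hlt).mono
    fun _ => le_of_lt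

lemma isBoundedUnder_norm_coeff_valuePoly (ha : ∀ j, a j ∈ uDisk) (hg : ContinuousOn g uDisk)
    (hz : z ∈ uDisk) (k : ℕ) :
    IsBoundedUnder (· ≤ ·) (𝓝 z) fun v => ‖(valuePoly a g v).coeff k‖ := by
  obtain ⟨M, hM⟩ := exists_eventually_forall_mem_fiber_norm_le ha hg hz
  refine ⟨max (M + M) 1 ^ n * n.choose (n / 2), eventually_map.mpr ?_⟩
  filter_upwards [hM, isOpen_uDisk.mem_nhds hz] with v hv hvD
  have hroots : ∀ c ∈ (valuePoly a g v).roots, ‖c‖ ≤ M + M := by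
    rw [roots_valuePoly]
    intro c hc
    obtain ⟨w, hw, rfl⟩ := Multiset.mem_map.mp hc
    exact norm_sub_le_of_le (hv w ((mem_fiberMS ha hvD).mp hw)) (hv v (self_mem_fiber a hvD))
  simpa only [Polynomial.map_id] using coeff_bdd_of_roots_le (RingHom.id ℂ) (monic_valuePoly a g v)
    (IsAlgClosed.splits _) ((natDegree_valuePoly a g v).trans (card_fiberMS ha hvD)).le
    (by simpa only [Polynomial.map_id] using hroots) k

lemma meromorphicOn_coeff_valuePoly (ha : ∀ j, a j ∈ uDisk) (hg : DifferentiableOn ℂ g uDisk)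
    (k : ℕ) : MeromorphicOn (fun v => (valuePoly a g v).coeff k) uDisk := by
  intro z hz
  have hreg := (eventually_codiscreteWithin_iff_of_isOpen isOpen_uDisk).mp
    (eventually_isRegularPoint ha) z hz
  refine meromorphicAt_of_differentiableAt_of_isBoundedUnder ?_
    ((isBoundedUnder_norm_coeff_valuePoly ha hg.continuousOn hz k).mono nhdsWithin_le_nhds)
  filter_upwards [hreg, mem_nhdsWithin_of_mem_nhds (isOpen_uDisk.mem_nhds hz)] with v hv hvD
  exact (analyticAt_coeff_valuePoly ha hg hvD hv k).differentiableAt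

lemma exists_eventually_ncard_fiber_level_eq (ha : ∀ j, a j ∈ uDisk)
    (hg : DifferentiableOn ℂ g uDisk) :
    ∃ m, ∀ᶠ z in codiscreteWithin uDisk, {w ∈ fiber a z | g w = g z}.ncard = m := by
  have hlead : ∀ᶠ z in codiscreteWithin uDisk, (valuePoly a g z).coeff n ≠ 0 := by
    filter_upwards [self_mem_codiscreteWithin uDisk] with z hz
    have hdeg : (valuePoly a g z).natDegree = n :=
      (natDegree_valuePoly a g z).trans (card_fiberMS ha hz)
    have hcoeff := (monic_valuePoly a g z).coeff_natDegree
    rw [hdeg] at hcoeff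
    exact hcoeff ▸ one_ne_zero
  obtain ⟨m, hm⟩ := exists_eventually_natTrailingDegree_eq isConnected_uDisk.isPreconnected
    (meromorphicOn_coeff_valuePoly ha hg) ⟨n, hlead⟩
  refine ⟨m, ?_⟩
  filter_upwards [hm, eventually_isRegularPoint ha, self_mem_codiscreteWithin uDisk]
    with z hz hreg hzD
  rw [← natTrailingDegree_valuePoly_eq_ncard g ha hzD hreg, hz]

end ValuePoly

/-! ### Vanishing of `Γ(g)` -/

section Gamma

variable {n : ℕ} [NeZero n] {a : Fin n → ℂ} {g G : ℂ → ℂ} {z : ℂ}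

lemma calD_eq_zero_iff (ha : ∀ j, a j ∈ uDisk) (hz : z ∈ uDisk) (hreg : IsRegularPoint a z)
    (f : ℂ → ℂ) : calD a f z = 0 ↔ ∃ w ∈ fiber a z, w ≠ z ∧ f w = f z := by
  simp only [calD, Multiset.prod_eq_zero_iff, Multiset.mem_map,
    (nodup_fiberMS ha hz hreg).mem_erase_iff, mem_fiberMS ha hz, sub_eq_zero]
  exact exists_congr fun w => ⟨fun ⟨⟨hwz, hw⟩, h⟩ => ⟨hw, hwz, h.symm⟩,
    fun ⟨hw, hwz, h⟩ => ⟨⟨hwz, hw⟩, h.symm⟩⟩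

lemma IsGamma.eq_zero_iff (hG : IsGamma a g G) (ha : ∀ j, a j ∈ uDisk) (hz : z ∈ uDisk)
    (hreg : IsRegularPoint a z) : G z = 0 ↔ ∃ w ∈ fiber a z, w ≠ z ∧ g w = g z := by
  have hid : calD a id z ≠ 0 := by
    rw [Ne, calD_eq_zero_iff ha hz hreg]
    exact fun ⟨_, _, hne, heq⟩ => hne heq
  rw [← calD_eq_zero_iff ha hz hreg g, ← hG.2 z hz, mul_eq_zero, or_iff_left hid]

lemma IsGamma.eqOn_zero_of_splitsIntoLevelBlocks (hG : IsGamma a g G) (ha : ∀ j, a j ∈ uDisk)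
    {m : ℕ} (hm : 2 ≤ m) (hsplit : ∀ᶠ z in codiscreteWithin uDisk,
      IsRegularPoint a z ∧ SplitsIntoLevelBlocks g m (fiber a z)) : EqOn G 0 uDisk := by
  refine eqOn_of_eventuallyEq_codiscreteWithin isOpen_uDisk hG.1.continuousOn
    continuousOn_const ?_
  filter_upwards [hsplit, self_mem_codiscreteWithin uDisk] with z ⟨hreg, hblocks⟩ hz
  exact (hG.eq_zero_iff ha hz hreg).mpr (hblocks.exists_ne hm (self_mem_fiber a hz))

lemma exists_eventually_splitsIntoLevelBlocks (ha : ∀ j, a j ∈ uDisk)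
    (hg : DifferentiableOn ℂ g uDisk) (hG : IsGamma a g G) (hzero : EqOn G 0 uDisk) :
    ∃ m, 2 ≤ m ∧ ∀ᶠ z in codiscreteWithin uDisk,
      IsRegularPoint a z ∧ SplitsIntoLevelBlocks g m (fiber a z) := by
  obtain ⟨m, hm⟩ := exists_eventually_ncard_fiber_level_eq ha hg
  have hreg := eventually_isRegularPoint ha
  refine ⟨m, ?_, ?_⟩
  · have := neBot_codiscreteWithin_of_isOpen isOpen_uDisk isConnected_uDisk.nonempty
    obtain ⟨z, hz, hzm, hzreg⟩ :=
      (Eventually.and (self_mem_codiscreteWithin uDisk) (hm.and hreg)).exists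
    obtain ⟨w, hw, hwz, hgw⟩ := (hG.eq_zero_iff ha hz hzreg).mp (hzero hz)
    rw [← hzm]
    exact (one_lt_ncard ((finite_fiber ha hz).subset (sep_subset _ _))).mpr
      ⟨w, ⟨hw, hgw⟩, z, ⟨self_mem_fiber a hz, rfl⟩, hwz⟩
  · filter_upwards [hreg, eventually_codiscreteWithin_forall_mem_fiber ha hm] with z hz hlevels
    exact ⟨hz, splitsIntoLevelBlocks_of_ncard_eq fun w hw => fiber_eq_of_mem hw ▸ hlevels w hw⟩

end Gamma

theorem stmt13_general {n : ℕ} [NeZero n] (a : Fin n → ℂ) (ha : ∀ j, a j ∈ uDisk)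
    (g Γg : ℂ → ℂ) (hg : DifferentiableOn ℂ g uDisk) (hΓg : IsGamma a g Γg)
    (S0 : Set ℂ)
    (hS0 : S0 = {z | z ∈ uDisk ∧
      ∃ w ∈ uDisk, blaschke a w = blaschke a z ∧ deriv (blaschke a) w = 0}) :
    (∀ z ∈ uDisk, Γg z = 0) ↔
      ∃ (Ω : Set ℂ) (m : ℕ), IsOpen Ω ∧ Ω ⊆ uDisk \ S0 ∧ 2 ≤ m ∧
        (∀ z ∈ uDisk \ Ω, ∃ U ∈ nhds z, U ∩ (uDisk \ Ω) ⊆ {z}) ∧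
        ∀ z ∈ Ω, ∃ Pa : Set (Set ℂ),
          ⋃₀ Pa = {w | w ∈ uDisk ∧ blaschke a w = blaschke a z} ∧
          Pa.PairwiseDisjoint id ∧
          ∀ A ∈ Pa, A.ncard = m ∧ ∀ w₁ ∈ A, ∀ w₂ ∈ A, g w₁ = g w₂ := by
  subst hS0
  constructor
  · intro hzero
    obtain ⟨m, hm, hsplit⟩ := exists_eventually_splitsIntoLevelBlocks ha hg hΓg hzero
    obtain ⟨Ω, hΩ, hΩD, hdiscrete, hΩsplit⟩ :=
      (eventually_codiscreteWithin_iff_exists_isOpen isOpen_uDisk).mp hsplit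
    refine ⟨Ω, m, hΩ, fun z hz => ⟨hΩD hz, ?_⟩, hm, hdiscrete, fun z hz => (hΩsplit z hz).2⟩
    rintro ⟨-, w, hw, hwz, hderiv⟩
    exact (hΩsplit z hz).1 w ⟨hw, hwz⟩ hderiv
  · rintro ⟨Ω, m, hΩ, hΩS, hm, hdiscrete, hsplit⟩
    have hreg : ∀ z ∈ Ω, IsRegularPoint a z := fun z hz w hw hderiv =>
      (hΩS hz).2 ⟨(hΩS hz).1, w, hw.1, hw.2, hderiv⟩
    exact hΓg.eqOn_zero_of_splitsIntoLevelBlocks ha hm <|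
      (eventually_codiscreteWithin_iff_exists_isOpen isOpen_uDisk).mpr
        ⟨Ω, hΩ, fun z hz => (hΩS hz).1, hdiscrete, fun z hz => ⟨hreg z hz, hsplit z hz⟩⟩

/-- **Theorem on identical vanishing of `Γ(g)`.** `Γ(g) ≡ 0` on `𝔻` iff
there are an open set `Ω ⊆ 𝔻 ∖ 𝒮₀` with `𝔻 ∖ Ω` discrete and an integer `m ≥ 2` such that
for every `z ∈ Ω` the fiber `B⁻¹(B(z))` is partitioned into subsets of cardinality `m`
on each of which `g` is constant. -/
theorem stmt13 {n : ℕ} (hn : 2 ≤ n) (a : Fin n → ℂ) (ha : ∀ j, a j ∈ uDisk)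
    (ha0 : a ⟨0, by omega⟩ = 0)
    (g Γg : ℂ → ℂ) (hg : MemHinf g) (hΓg : IsGamma a g Γg)
    (S0 : Set ℂ)
    (hS0 : S0 = {z | z ∈ uDisk ∧
      ∃ w ∈ uDisk, blaschke a w = blaschke a z ∧ deriv (blaschke a) w = 0}) :
    (∀ z ∈ uDisk, Γg z = 0) ↔
      ∃ (Ω : Set ℂ) (m : ℕ), IsOpen Ω ∧ Ω ⊆ uDisk \ S0 ∧ 2 ≤ m ∧
        (∀ z ∈ uDisk \ Ω, ∃ U ∈ nhds z, U ∩ (uDisk \ Ω) ⊆ {z}) ∧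
        ∀ z ∈ Ω, ∃ Pa : Set (Set ℂ),
          ⋃₀ Pa = {w | w ∈ uDisk ∧ blaschke a w = blaschke a z} ∧
          Pa.PairwiseDisjoint id ∧
          ∀ A ∈ Pa, A.ncard = m ∧ ∀ w₁ ∈ A, ∀ w₂ ∈ A, g w₁ = g w₂ := by
  have : NeZero n := ⟨by omega⟩
  exact stmt13_general a ha g Γg hg.1 hΓg S0 hS0
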